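/- arXiv:math/0509240 — 2 statements merged into one kernel-verified Lean document; each statement's English description precedes it below -/
import Mathlib

section
/- Let t be a real number with t ≠ −1, and let k ≥ 1 be an integer. Then Σ_{j=1}^{k} (1 − t^j)^2 − Σ_{j=1}^{k−1} (1 − t^j)(1 − t^{j+1}) = (1 − t^k)(1 − t^{k+1})/(1 + t). -/
/-- For a real `t ≠ −1` and an integer `k ≥ 1`,
`Σ_{j=1}^{k} (1 − t^j)² − Σ_{j=1}^{k−1} (1 − t^j)(1 − t^{j+1})
  = (1 − t^k)(1 − t^{k+1})/(1 + t)`. -/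
theorem stmt_8 (t : ℝ) (ht : t ≠ -1) (k : ℕ) (hk : 1 ≤ k) :
    (∑ j ∈ Finset.Icc 1 k, (1 - t ^ j) ^ 2)
      - (∑ j ∈ Finset.Icc 1 (k - 1), (1 - t ^ j) * (1 - t ^ (j + 1)))
      = (1 - t ^ k) * (1 - t ^ (k + 1)) / (1 + t) := by
  have h1 : 1 + t ≠ 0 := fun h => ht (by linarith)
  rw [eq_div_iff h1]
  obtain ⟨n, rfl⟩ : ∃ n, k = n + 1 := ⟨k - 1, by omega⟩
  clear hk
  simp only [Nat.add_sub_cancel]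
  induction n with
  | zero => simp; ring
  | succ n ih =>
    rw [Finset.sum_Icc_succ_top (by omega : 1 ≤ n + 1 + 1),
      Finset.sum_Icc_succ_top (by omega : 1 ≤ n + 1)
        (fun j => (1 - t ^ j) * (1 - t ^ (j + 1)))]
    linear_combination ih
end

section
/- Let (n; k_1, …, k_n) be one of the five tuples (5; 1,1,1,1,1), (4; 1,1,1,2), (3; 2,2,3), (3; 1,3,4), (3; 1,2,6), and let t > 0 be a real solution of the equation n − 1 − t = Σ_{l=1}^n 1/(1 + t + ⋯ + t^{k_l}). Then the real number 1 does not lie in the ℚ-linear span of the finite set of real numbers { S_{j−1}(t)/S_{k_l}(t) : 1 ≤ l ≤ n, 1 ≤ j ≤ k_l }, where S_m(t) = 1 + t + ⋯ + t^m. -/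
open Polynomial

lemma aux_pow (t : ℝ) (ht : t ≠ 0) (k : ℕ) : ∃ A B : ℚ[X], B.Monic ∧ B.natDegree = k ∧
    (∃ A' B' : ℚ[X], B'.degree < k ∧ t ^ k = aeval (t + 1/t) A' + t * aeval (t+1/t) B') ∧
    t ^ (k+1) = aeval (t + 1/t) A + t * aeval (t+1/t) B := by
  induction k with
  | zero => exact ⟨0, 1, monic_one, by simp, ⟨1, 0, by simp, by simp⟩, by simp⟩
  | succ k ih =>
    obtain ⟨A, B, hB, hd, ⟨A', B', hd', h'⟩, h⟩ := ih
    have hBd : B.degree = k := by rw [degree_eq_natDegree hB.ne_zero, hd]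
    have hX : (X * B : ℚ[X]).degree = (k + 1 : ℕ) := by
      rw [degree_mul, degree_X, hBd]; push_cast; ring
    have hlt : B'.degree < (X * B : ℚ[X]).degree := by
      rw [hX]; exact hd'.trans (by exact_mod_cast Nat.lt_succ_self k)
    refine ⟨X * A - A', X * B - B', (monic_X.mul hB).sub_of_left hlt, ?_, ⟨A, B, ?_, h⟩, ?_⟩
    · apply natDegree_eq_of_degree_eq_some
      rw [degree_sub_eq_left_of_degree_lt hlt, hX]
    · rw [hBd]; exact_mod_cast Nat.lt_succ_self k
    · have : t ^ (k+1+1) = (t + 1/t) * t ^ (k+1) - t^k := by field_simp; ring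
      rw [this, h, h']
      simp; ring

lemma aux_inv (t : ℝ) (ht : t ≠ 0) (k : ℕ) : ∃ A B : ℚ[X], B.degree < k ∧
    t⁻¹ ^ k = aeval (t + 1/t) A + t * aeval (t+1/t) B := by
  obtain ⟨A, B, -, -, ⟨A', B', hd', h'⟩, -⟩ := aux_pow t⁻¹ (inv_ne_zero ht) k
  have e : t⁻¹ + 1 / t⁻¹ = t + 1/t := by simp [add_comm]
  rw [e] at h'
  refine ⟨A' + X * B', -B', by simpa using hd', ?_⟩
  rw [h']
  simp; ring

lemma aux_low (t : ℝ) (ht : t ≠ 0) (m j : ℕ) (hj : j ≤ 2 * m) : ∃ A B : ℚ[X], B.degree < m ∧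
    t ^ j = t ^ m * (aeval (t + 1/t) A + t * aeval (t+1/t) B) := by
  rcases le_total m j with h | h
  · obtain ⟨i, rfl⟩ := Nat.exists_eq_add_of_le h
    obtain ⟨-, -, -, -, ⟨A', B', hd', h'⟩, -⟩ := aux_pow t ht i
    exact ⟨A', B', hd'.trans_le (by exact_mod_cast (by omega : i ≤ m)), by rw [← h', pow_add]⟩
  · obtain ⟨i, rfl⟩ := Nat.exists_eq_add_of_le h
    obtain ⟨A', B', hd', h'⟩ := aux_inv t ht i
    refine ⟨A', B', hd'.trans_le (by exact_mod_cast (by omega : i ≤ j+i)), ?_⟩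
    rw [← h', pow_add, mul_assoc, ← mul_pow, mul_inv_cancel₀ ht, one_pow, mul_one]

lemma aux_poly (t : ℝ) (ht : t ≠ 0) (m : ℕ) (P : ℚ[X]) (hP : P.natDegree ≤ 2 * m) :
    ∃ A B : ℚ[X], B.degree < m ∧
    aeval t P = t ^ m * (aeval (t + 1/t) A + t * aeval (t+1/t) B) := by
  have H : ∀ j : ℕ, ∃ A B : ℚ[X], j ≤ 2 * m → B.degree < m ∧
    t ^ j = t ^ m * (aeval (t + 1/t) A + t * aeval (t+1/t) B) := by
    intro j
    by_cases hj : j ≤ 2 * m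
    · obtain ⟨A, B, h⟩ := aux_low t ht m j hj
      exact ⟨A, B, fun _ => h⟩
    · exact ⟨0, 0, fun h => absurd h hj⟩
  choose A B H using H
  refine ⟨∑ j ∈ Finset.range (2*m+1), C (P.coeff j) * A j,
    ∑ j ∈ Finset.range (2*m+1), C (P.coeff j) * B j, ?_, ?_⟩
  · rw [← mem_degreeLT]
    apply Submodule.sum_mem
    intro j hj
    rw [← smul_eq_C_mul]
    apply Submodule.smul_mem
    rw [mem_degreeLT]
    exact (H j (by simp at hj; omega)).1
  · rw [aeval_eq_sum_range' (n := 2*m+1) (by omega), map_sum, map_sum, Finset.mul_sum,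
      ← Finset.sum_add_distrib, Finset.mul_sum]
    apply Finset.sum_congr rfl
    intro j hj
    rw [(H j (by simp at hj; omega)).2, Algebra.smul_def]
    simp; ring

lemma core (q : ℚ[X]) (hirr : Irreducible q) (m : ℕ) (hdeg : q.natDegree = m + 1)
    (t v : ℝ) (ht : t ≠ 0) (hu : aeval (t + 1/t) q = 0) (hv : aeval v q = 0)
    (hv1 : -2 < v) (hv2 : v < 2) (P : ℚ[X]) (hP : P.natDegree ≤ 2 * m)
    (h : t ^ (2*m+1) = aeval t P) : False := by
  obtain ⟨A, B, hB, hAB⟩ := aux_poly t ht m P hP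
  obtain ⟨A', B', hB', hd', -, hAB'⟩ := aux_pow t ht m
  set u := t + 1/t with hu0
  have h0 : aeval u (A' - A) + t * aeval u (B' - B) = 0 := by
    have : t ^ m * (aeval u (A' - A) + t * aeval u (B' - B)) = 0 := by
      have e : t ^ (2*m+1) = t^m * t^(m+1) := by ring
      rw [e, hAB', hAB] at h
      simp only [map_sub]
      linear_combination h
    exact (mul_eq_zero.1 this).resolve_left (pow_ne_zero _ ht)
  have hdB : B'.degree = m := by rw [degree_eq_natDegree hB'.ne_zero, hd']
  have hmon : (B' - B).Monic := hB'.sub_of_left (by rw [hdB]; exact hB)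
  have hdd : (B' - B).natDegree = m := by
    apply natDegree_eq_of_degree_eq_some
    rw [degree_sub_eq_left_of_degree_lt (by rw [hdB]; exact hB), hdB]
  generalize B' - B = D at *
  generalize A' - A = E at *
  have h1 : aeval u (E^2 + X*E*D + D^2) = 0 := by
    simp only [map_add, map_mul, map_pow, aeval_X]
    have : (aeval u E + t * aeval u D) * (aeval u E + 1/t * aeval u D) = 0 := by rw [h0]; simp
    rw [← this, hu0]; field_simp; ring
  have dvd_of : ∀ (w : ℝ) (F : ℚ[X]), aeval w q = 0 → aeval w F = 0 → q ∣ F := by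
    intro w F hw hF
    have := minpoly.dvd ℚ w hF
    have h2 := minpoly.dvd ℚ w hw
    have hint : IsIntegral ℚ w := by
      rw [← isAlgebraic_iff_isIntegral]; exact ⟨q, hirr.ne_zero, hw⟩
    exact ((minpoly.irreducible hint).associated_of_dvd hirr h2).symm.dvd.trans this
  have h2 : aeval v (E^2 + X*E*D + D^2) = 0 := by
    obtain ⟨c, hc⟩ := dvd_of u _ hu h1
    rw [hc, map_mul, hv, zero_mul]
  simp only [map_add, map_mul, map_pow, aeval_X] at h2
  have h3 : aeval v D = 0 := by
    by_contra hne
    have hp : 0 < (aeval v D)^2 := by positivity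
    have : 0 < (4 - v^2) * (aeval v D)^2 := mul_pos (by nlinarith) hp
    nlinarith [sq_nonneg (2 * aeval v E + v * aeval v D)]
  have h4 := natDegree_le_of_dvd (dvd_of v D hv h3) hmon.ne_zero
  omega

lemma span_red (t : ℝ) (L : ℚ[X]) (d : ℕ) (S : Set ℝ)
    (hgen : ∀ x ∈ S, ∃ P : ℚ[X], P.natDegree ≤ d ∧ aeval t P = x * aeval t L)
    (h1 : (1:ℝ) ∈ Submodule.span ℚ S) (hL : (X^(d+1) - L).natDegree ≤ d) :
    ∃ P : ℚ[X], P.natDegree ≤ d ∧ t ^ (d+1) = aeval t P := by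
  have : ∀ x ∈ Submodule.span ℚ S, ∃ P : ℚ[X], P.natDegree ≤ d ∧ aeval t P = x * aeval t L := by
    intro x hx
    induction hx using Submodule.span_induction with
    | mem x hx => exact hgen x hx
    | zero => exact ⟨0, by simp, by simp⟩
    | add x y _ _ hx hy =>
      obtain ⟨P, hP, h⟩ := hx
      obtain ⟨Q, hQ, h'⟩ := hy
      exact ⟨P + Q, natDegree_add_le_of_degree_le hP hQ, by rw [map_add, h, h']; ring⟩
    | smul a x _ hx =>
      obtain ⟨P, hP, h⟩ := hx
      exact ⟨a • P, (natDegree_smul_le a P).trans hP, by rw [map_smul, h]; simp⟩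
  obtain ⟨P, hP, h⟩ := this 1 h1
  exact ⟨(X^(d+1) - L) + P, natDegree_add_le_of_degree_le hL hP, by simp [h]⟩

/-- transfer of irreducibility -/
lemma irr_transfer (p : ℕ) [Fact p.Prime] (f : ℤ[X]) (hf : f.Monic)
    (h : Irreducible (f.map (Int.castRingHom (ZMod p)))) :
    Irreducible (f.map (Int.castRingHom ℚ)) := by
  have := hf.irreducible_of_irreducible_map (Int.castRingHom (ZMod p)) f h
  exact (IsPrimitive.Int.irreducible_iff_irreducible_map_cast hf.isPrimitive).1 this

lemma irr_two (f : (ZMod 2)[X]) (hf : f.Monic) (h4 : 4 ≤ f.natDegree) (h5 : f.natDegree ≤ 5)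
    (h0 : f.eval 0 ≠ 0) (h1 : f.eval 1 ≠ 0) (h2 : ¬ (X^2 + X + 1 : (ZMod 2)[X]) ∣ f) :
    Irreducible f := by
  have hne : f ≠ 1 := by rintro rfl; simp at h4
  have hroot : ∀ a : ZMod 2, f.eval a ≠ 0 := by
    intro a
    fin_cases a
    · exact h0
    · exact h1
  rw [hf.irreducible_iff_lt_natDegree_lt hne]
  intro q hq hd hdvd
  have hqr : ∀ a : ZMod 2, q.eval a ≠ 0 := by
    intro a ha
    obtain ⟨c, rfl⟩ := hdvd
    exact hroot a (by simp [ha])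
  simp only [Finset.mem_Ioc] at hd
  have : q.natDegree = 1 ∨ q.natDegree = 2 := by omega
  rcases this with h | h
  · have hl := hq.coeff_natDegree
    rw [h] at hl
    have e := hqr (- q.coeff 0)
    rw [eval_eq_sum_range, h] at e
    simp [Finset.sum_range_succ, hl] at e
    exact e (CharTwo.add_self_eq_zero _)
  · have hl := hq.coeff_natDegree
    rw [h] at hl
    have e0 := hqr 0
    have e1 := hqr 1
    rw [eval_eq_sum_range, h] at e0 e1
    simp [Finset.sum_range_succ, hl] at e0 e1
    have key : ∀ a b : ZMod 2, a ≠ 0 → a + b + 1 ≠ 0 → a = 1 ∧ b = 1 := by decide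
    obtain ⟨ha, hb⟩ := key _ _ e0 e1
    apply h2
    have : q = X^2 + X + 1 := by
      rw [q.as_sum_range, h]
      simp only [Finset.sum_range_succ, hl, ha, hb]
      simp [← C_mul_X_pow_eq_monomial]
      ring
    rwa [← this]

lemma not_dvd_aux (f h r : (ZMod 2)[X]) (e : f = (X^2+X+1) * h + r) (hr : r ≠ 0)
    (hd : r.natDegree < 2) : ¬ (X^2 + X + 1 : (ZMod 2)[X]) ∣ f := by
  intro hdvd
  have h1 : (X^2 + X + 1 : (ZMod 2)[X]) ∣ r := by
    rw [e] at hdvd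
    exact (dvd_add_right (Dvd.intro _ rfl)).1 hdvd
  have h2 := natDegree_le_of_dvd h1 hr
  have h3 : (X^2 + X + 1 : (ZMod 2)[X]).natDegree = 2 := by compute_degree!
  omega

lemma char2 : (2 : (ZMod 2)[X]) = 0 := by
  have : ((2:ℕ) : (ZMod 2)[X]) = 0 := CharP.cast_eq_zero _ 2
  exact_mod_cast this

lemma irr2 : Irreducible (X^2 - X - 3 : ℚ[X]) := by
  have := irr_transfer 2 (X^2 - X - 3 : ℤ[X]) (by monicity!) ?_
  · simpa using this
  have e : (X^2 - X - 3 : ℤ[X]).map (Int.castRingHom (ZMod 2)) = X^2 + X + 1 := by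
    simp; linear_combination (-X - 2 : (ZMod 2)[X]) * char2
  have hd : (X^2 + X + 1 : (ZMod 2)[X]).natDegree = 2 := by compute_degree!
  rw [e, Monic.irreducible_iff_roots_eq_zero_of_degree_le_three (by monicity!)
    (by omega) (by omega)]
  rw [Multiset.eq_zero_iff_forall_notMem]
  intro a ha
  have h := (mem_roots'.1 ha).2
  simp [IsRoot] at h
  clear ha
  revert a; decide

lemma irr3 : Irreducible (X^3 - 4 * X - 1 : ℚ[X]) := by
  have := irr_transfer 3 (X^3 - 4 * X - 1 : ℤ[X]) (by monicity!) ?_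
  · simpa using this
  have e : (X^3 - 4 * X - 1 : ℤ[X]).map (Int.castRingHom (ZMod 3)) = X^3 - 4 * X - 1 := by
    simp
  have hd : (X^3 - 4 * X - 1 : (ZMod 3)[X]).natDegree = 3 := by compute_degree!
  rw [e, Monic.irreducible_iff_roots_eq_zero_of_degree_le_three (by monicity!)
    (by omega) (by omega)]
  rw [Multiset.eq_zero_iff_forall_notMem]
  intro a ha
  have h := (mem_roots'.1 ha).2
  simp [IsRoot] at h
  clear ha
  revert a; decide

lemma irr4 : Irreducible (X^4 - 4 * X^2 - X + 1 : ℚ[X]) := by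
  have := irr_transfer 2 (X^4 - 4 * X^2 - X + 1 : ℤ[X]) (by monicity!) ?_
  · simpa using this
  have e : (X^4 - 4 * X^2 - X + 1 : ℤ[X]).map (Int.castRingHom (ZMod 2)) = X^4 + X + 1 := by
    simp; linear_combination (-X - 2 * X^2 : (ZMod 2)[X]) * char2
  rw [e]
  have hd : (X^4 + X + 1 : (ZMod 2)[X]).natDegree = 4 := by compute_degree!
  refine irr_two _ (by monicity!) hd.ge (by omega) (by simp) (by simp; decide) ?_
  refine not_dvd_aux _ (X^2 - X) 1 ?_ one_ne_zero (by simp)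
  linear_combination (X : (ZMod 2)[X]) * char2

lemma irr5 : Irreducible (X^5 + X^4 - 5 * X^3 - 5 * X^2 + 4 * X + 3 : ℚ[X]) := by
  have := irr_transfer 2 (X^5 + X^4 - 5 * X^3 - 5 * X^2 + 4 * X + 3 : ℤ[X]) (by monicity!) ?_
  · simpa using this
  have e : (X^5 + X^4 - 5 * X^3 - 5 * X^2 + 4 * X + 3 : ℤ[X]).map (Int.castRingHom (ZMod 2))
      = X^5 + X^4 + X^3 + X^2 + 1 := by
    simp; linear_combination (-3 * X^3 - 3 * X^2 + 2 * X + 1 : (ZMod 2)[X]) * char2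
  rw [e]
  have hd : (X^5 + X^4 + X^3 + X^2 + 1 : (ZMod 2)[X]).natDegree = 5 := by compute_degree!
  refine irr_two _ (by monicity!) (by omega) hd.le (by simp) (by simp; decide) ?_
  refine not_dvd_aux _ (X^3 + 1) X ?_ X_ne_zero (by simp)
  linear_combination (-X : (ZMod 2)[X]) * char2

lemma gen_deg (j e d : ℕ) (H : ℚ[X]) (hH : H.natDegree ≤ e) (h : j - 1 + e ≤ d) :
    ((∑ i ∈ Finset.range j, X ^ i) * H : ℚ[X]).natDegree ≤ d := by
  refine natDegree_mul_le.trans (le_trans (add_le_add ?_ hH) h)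
  apply natDegree_sum_le_of_forall_le
  intro i hi
  rw [natDegree_X_pow]
  simp at hi; omega

lemma gen_mem (t : ℝ) (j k e d : ℕ) (L H : ℚ[X])
    (hL : aeval t L = aeval t H * ∑ i ∈ Finset.range (k + 1), t ^ i)
    (hH : H.natDegree ≤ e) (h : j - 1 + e ≤ d)
    (h0 : (∑ i ∈ Finset.range (k + 1), t ^ i) ≠ 0) :
    ∃ P : ℚ[X], P.natDegree ≤ d ∧ aeval t P =
      ((∑ i ∈ Finset.range j, t ^ i) / ∑ i ∈ Finset.range (k + 1), t ^ i) * aeval t L := by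
  refine ⟨_, gen_deg j e d H hH h, ?_⟩
  rw [hL, map_mul, map_sum]
  simp only [map_pow, aeval_X]
  field_simp

theorem stmt_18 (ks : List ℕ)
    (hks : ks = [1, 1, 1, 1, 1] ∨ ks = [1, 1, 1, 2] ∨ ks = [2, 2, 3] ∨
      ks = [1, 3, 4] ∨ ks = [1, 2, 6])
    (t : ℝ) (ht : 0 < t)
    (heq : (ks.length : ℝ) - 1 - t =
      (ks.map fun kl => 1 / ∑ i ∈ Finset.range (kl + 1), t ^ i).sum) :
    (1 : ℝ) ∉ Submodule.span ℚ
      {x : ℝ | ∃ kl ∈ ks, ∃ j : ℕ, 1 ≤ j ∧ j ≤ kl ∧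
        x = (∑ i ∈ Finset.range j, t ^ i) / ∑ i ∈ Finset.range (kl + 1), t ^ i} := by
  intro hmem
  have hpos : ∀ k : ℕ, (∑ i ∈ Finset.range (k + 1), t ^ i) ≠ 0 := fun k =>
    (Finset.sum_pos (fun i _ => pow_pos ht i) (by simp)).ne'
  have ht0 := ht.ne'
  rcases hks with rfl | rfl | rfl | rfl | rfl
  · obtain ⟨P, hP, h⟩ := span_red t (1 + X) 0 _ (by
      rintro x ⟨k, hk, j, hj1, hj, rfl⟩
      simp at hk; subst hk
      exact gen_mem t j 1 0 0 _ 1 (by simp [Finset.sum_range_succ]) (by compute_degree) (by omega)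
        (hpos _)) hmem (by ring_nf; compute_degree)
    rw [eq_C_of_natDegree_le_zero hP] at h
    simp at h
    generalize P.coeff 0 = c at h
    have hp : t^2 - 3*t + 1 = 0 := by
      simp [Finset.sum_range_succ] at heq
      field_simp at heq
      linear_combination -heq
    have hc : (2*c-3)*(2*c-3) = 5 := by
      rw [h] at hp
      have : ((2*c-3)*(2*c-3) : ℝ) = 5 := by linear_combination 4*hp
      exact_mod_cast this
    have : ¬ IsSquare (5:ℚ) := by
      rw [Rat.isSquare_iff]
      rintro ⟨⟨a, ha⟩, -⟩
      norm_num at ha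
      have h1 : a ≤ 2 := by nlinarith
      have h2 : -2 ≤ a := by nlinarith
      interval_cases a <;> omega
    exact this ⟨_, hc.symm⟩
  · obtain ⟨P, hP, h⟩ := span_red t ((1 + X) * (1 + X + X^2)) 2 _ (by
      rintro x ⟨k, hk, j, hj1, hj, rfl⟩
      simp at hk; rcases hk with rfl | rfl
      · exact gen_mem t j 1 2 2 _ (1 + X + X^2) (by simp [Finset.sum_range_succ]; ring)
          (by compute_degree) (by omega) (hpos _)
      · exact gen_mem t j 2 1 2 _ (1 + X) (by simp [Finset.sum_range_succ])
          (by compute_degree) (by omega) (hpos _)) hmem (by ring_nf; compute_degree)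
    have hp : t^4 - t^3 - t^2 - t + 1 = 0 := by
      have h1 := hpos 1
      have h2 := hpos 2
      simp [Finset.sum_range_succ] at heq h1 h2
      field_simp at heq
      linear_combination -heq
    obtain ⟨v, ⟨hv1, hv2⟩, hv⟩ := intermediate_value_Icc' (a := -3/2) (b := 0) (by norm_num)
      (f := fun x : ℝ => x^2 - x - 3) (by fun_prop) (show (0:ℝ) ∈ _ by norm_num)
    refine core _ irr2 1 (by compute_degree!) t v ht0 ?_ (by simpa [map_ofNat] using hv) (by linarith)
      (by linarith) P hP h
    simp [map_ofNat]; field_simp; linear_combination hp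
  · obtain ⟨P, hP, h⟩ := span_red t ((1 + X + X^2) * (1 + X + X^2 + X^3)) 4 _ (by
      rintro x ⟨k, hk, j, hj1, hj, rfl⟩
      simp at hk; rcases hk with rfl | rfl
      · exact gen_mem t j 2 3 4 _ (1 + X + X^2 + X^3) (by simp [Finset.sum_range_succ]; ring)
          (by compute_degree) (by omega) (hpos _)
      · exact gen_mem t j 3 2 4 _ (1 + X + X^2) (by simp [Finset.sum_range_succ])
          (by compute_degree) (by omega) (hpos _)) hmem (by ring_nf; compute_degree)
    have hp : t^6 - t^4 - t^3 - t^2 + 1 = 0 := by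
      have h1 := hpos 2
      have h2 := hpos 3
      simp [Finset.sum_range_succ] at heq h1 h2
      field_simp at heq
      linear_combination -heq
    obtain ⟨v, ⟨hv1, hv2⟩, hv⟩ := intermediate_value_Icc' (a := -1) (b := 0) (by norm_num)
      (f := fun x : ℝ => x^3 - 4 * x - 1) (by fun_prop) (show (0:ℝ) ∈ _ by norm_num)
    refine core _ irr3 2 (by compute_degree!) t v ht0 ?_ (by simpa [map_ofNat] using hv) (by linarith)
      (by linarith) P hP h
    simp [map_ofNat]; field_simp; linear_combination hp
  · obtain ⟨P, hP, h⟩ := span_red t ((1 + X) * (1 + X^2) * (1 + X + X^2 + X^3 + X^4)) 6 _ (by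
      rintro x ⟨k, hk, j, hj1, hj, rfl⟩
      simp at hk; rcases hk with rfl | rfl | rfl
      · exact gen_mem t j 1 6 6 _ ((1 + X^2) * (1 + X + X^2 + X^3 + X^4))
          (by simp [Finset.sum_range_succ]; ring)
          (by compute_degree) (by omega) (hpos _)
      · exact gen_mem t j 3 4 6 _ (1 + X + X^2 + X^3 + X^4)
          (by simp [Finset.sum_range_succ]; ring)
          (by compute_degree) (by omega) (hpos _)
      · exact gen_mem t j 4 3 6 _ ((1 + X) * (1 + X^2)) (by simp [Finset.sum_range_succ])
          (by compute_degree) (by omega) (hpos _)) hmem (by ring_nf; compute_degree)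
    have hp : t^8 - t^5 - t^4 - t^3 + 1 = 0 := by
      have h1 := hpos 1
      have h2 := hpos 3
      have h3 := hpos 4
      simp [Finset.sum_range_succ] at heq h1 h2 h3
      field_simp at heq
      have : (1 + t) * (t^8 - t^5 - t^4 - t^3 + 1) = 0 := by
        linear_combination -heq
      exact (mul_eq_zero.1 this).resolve_left h1
    obtain ⟨v, ⟨hv1, hv2⟩, hv⟩ := intermediate_value_Icc' (a := 0) (b := 1) (by norm_num)
      (f := fun x : ℝ => x^4 - 4 * x^2 - x + 1) (by fun_prop) (show (0:ℝ) ∈ _ by norm_num)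
    refine core _ irr4 3 (by compute_degree!) t v ht0 ?_ (by simpa [map_ofNat] using hv) (by linarith)
      (by linarith) P hP h
    simp [map_ofNat]; field_simp; linear_combination hp
  · obtain ⟨P, hP, h⟩ := span_red t
        ((1 + X) * (1 + X + X^2) * (1 + X + X^2 + X^3 + X^4 + X^5 + X^6)) 8 _ (by
      rintro x ⟨k, hk, j, hj1, hj, rfl⟩
      simp at hk; rcases hk with rfl | rfl | rfl
      · exact gen_mem t j 1 8 8 _ ((1 + X + X^2) * (1 + X + X^2 + X^3 + X^4 + X^5 + X^6))
          (by simp [Finset.sum_range_succ]; ring)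
          (by compute_degree) (by omega) (hpos _)
      · exact gen_mem t j 2 7 8 _ ((1 + X) * (1 + X + X^2 + X^3 + X^4 + X^5 + X^6))
          (by simp [Finset.sum_range_succ]; ring)
          (by compute_degree) (by omega) (hpos _)
      · exact gen_mem t j 6 3 8 _ ((1 + X) * (1 + X + X^2)) (by simp [Finset.sum_range_succ])
          (by compute_degree) (by omega) (hpos _)) hmem (by ring_nf; compute_degree)
    have hp : t^10 + t^9 - t^7 - t^6 - t^5 - t^4 - t^3 + t + 1 = 0 := by
      have h1 := hpos 1
      have h2 := hpos 2
      have h3 := hpos 6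
      simp [Finset.sum_range_succ] at heq h1 h2 h3
      field_simp at heq
      linear_combination -heq
    obtain ⟨v, ⟨hv1, hv2⟩, hv⟩ := intermediate_value_Icc (a := -1) (b := 0) (by norm_num)
      (f := fun x : ℝ => x^5 + x^4 - 5 * x^3 - 5 * x^2 + 4 * x + 3) (by fun_prop)
      (show (0:ℝ) ∈ _ by norm_num)
    refine core _ irr5 4 (by compute_degree!) t v ht0 ?_ (by simpa [map_ofNat] using hv) (by linarith)
      (by linarith) P hP h
    simp [map_ofNat]; field_simp; linear_combination hp
end
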